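/- The unit cross-polytope K₁ is covered by the six translates of (2/3)K₁ by the vectors ±(1/3, 0, 0), ±(0, 1/3, 0), ±(0, 0, 1/3); that is, K₁ ⊆ ((2/3)K₁ + (1/3,0,0)) ∪ ((2/3)K₁ − (1/3,0,0)) ∪ ((2/3)K₁ + (0,1/3,0)) ∪ ((2/3)K₁ − (0,1/3,0)) ∪ ((2/3)K₁ + (0,0,1/3)) ∪ ((2/3)K₁ − (0,0,1/3)). -/

import Mathlib

open Pointwise

/-- The unit cross-polytope in ℝ³. -/
def K1 : Set (Fin 3 → ℝ) := {x | |x 0| + |x 1| + |x 2| ≤ 1}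

/-!
Pick a coordinate of largest absolute value among the `n ≥ 2` coordinates of a point of the
cross-polytope and move it by `1 / n` towards `0`. If its absolute value `a` is at least `1 / n`,
the `ℓ¹`-norm drops by `1 / n`. Otherwise the other coordinates contribute at most `(n - 1) * a`,
so the new norm is at most `(1 / n - a) + (n - 1) * a = 1 / n + (n - 2) * a ≤ 1 - 1 / n`.
-/

theorem abs_sub_or_abs_add_eq_abs_abs_sub {α : Type*} [AddCommGroup α] [LinearOrder α]
    (a t : α) : |a - t| = |(|a| - t)| ∨ |a + t| = |(|a| - t)| := by
  rcases abs_choice a with ha | ha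
  · exact .inl (by rw [ha])
  · exact .inr (by rw [ha, ← neg_add', abs_neg])

theorem abs_sub_add_sum_erase_le_of_forall_le {R ι : Type*} [CommRing R] [LinearOrder R]
    [IsStrictOrderedRing R] [DecidableEq ι] {s : Finset ι} (hs : s.Nontrivial) {y : ι → R} {i : ι}
    (hi : i ∈ s) (hmax : ∀ j ∈ s, y j ≤ y i) {t : R} (hsum : ∑ j ∈ s, y j ≤ s.card * t) :
    |y i - t| + ∑ j ∈ s.erase i, y j ≤ (s.card - 1) * t := by
  have hsplit : y i + ∑ j ∈ s.erase i, y j = ∑ j ∈ s, y j := s.add_sum_erase y hi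
  rcases le_total t (y i) with ht | ht
  · rw [abs_of_nonneg (sub_nonneg.2 ht)]
    linarith
  · have hcard : (2 : R) ≤ s.card := mod_cast Finset.one_lt_card_iff_nontrivial.2 hs
    have hsum_le : ∑ j ∈ s, y j ≤ s.card * y i := by
      simpa only [nsmul_eq_mul] using s.sum_le_card_nsmul y (y i) hmax
    calc |y i - t| + ∑ j ∈ s.erase i, y j
        = t - y i + ∑ j ∈ s.erase i, y j := by rw [abs_of_nonpos (sub_nonpos.2 ht), neg_sub]
      _ ≤ t + (s.card - 2) * y i := by linarith
      _ ≤ t + (s.card - 2) * t := by gcongr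
      _ = (s.card - 1) * t := by ring

theorem sum_abs_sub_single {ι α : Type*} [AddCommGroup α] [Lattice α] [Fintype ι] [DecidableEq ι]
    (x : ι → α) (i : ι) (t : α) :
    ∑ j, |x j - (Pi.single i t : ι → α) j| = |x i - t| + ∑ j ∈ Finset.univ.erase i, |x j| := by
  rw [← Finset.add_sum_erase _ _ (Finset.mem_univ i), Pi.single_eq_same]
  congr 1
  refine Finset.sum_congr rfl fun j hj ↦ ?_
  rw [Pi.single_eq_of_ne (Finset.ne_of_mem_erase hj), sub_zero]

theorem exists_sum_abs_sub_single_le {ι R : Type*} [CommRing R] [LinearOrder R]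
    [IsStrictOrderedRing R] [Fintype ι] [DecidableEq ι] [Nontrivial ι] {x : ι → R} {t : R}
    (hx : ∑ j, |x j| ≤ Fintype.card ι * t) :
    ∃ i, ∑ j, |x j - (Pi.single i t : ι → R) j| ≤ (Fintype.card ι - 1) * t ∨
      ∑ j, |x j - (Pi.single i (-t) : ι → R) j| ≤ (Fintype.card ι - 1) * t := by
  obtain ⟨i, hi⟩ := Finite.exists_max fun j ↦ |x j|
  have hle : |(|x i| - t)| + ∑ j ∈ Finset.univ.erase i, |x j| ≤ (Fintype.card ι - 1) * t :=
    abs_sub_add_sum_erase_le_of_forall_le Finset.univ_nontrivial (Finset.mem_univ i)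
      (fun j _ ↦ hi j) hx
  simp only [sum_abs_sub_single, sub_neg_eq_add]
  refine ⟨i, ?_⟩
  rcases abs_sub_or_abs_add_eq_abs_abs_sub (x i) t with h | h
  · exact .inl (by rwa [h])
  · exact .inr (by rwa [h])

section CrossPolytope

variable {𝕜 ι : Type*} [Field 𝕜] [LinearOrder 𝕜] [IsStrictOrderedRing 𝕜] [Fintype ι]

variable (𝕜 ι) in
/-- The unit cross-polytope in `ι → 𝕜`, that is, the closed unit ball of the `ℓ¹`-norm. It is given
by the inequality because `ι → 𝕜` carries the supremum norm when `𝕜 = ℝ`. -/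
def crossPolytope : Set (ι → 𝕜) := {x | ∑ i, |x i| ≤ 1}

theorem mem_vadd_smul_crossPolytope_iff {r : 𝕜} (hr : 0 < r) {v x : ι → 𝕜} :
    x ∈ v +ᵥ r • crossPolytope 𝕜 ι ↔ ∑ i, |x i - v i| ≤ r := by
  rw [Set.mem_vadd_set_iff_neg_vadd_mem, Set.mem_smul_set_iff_inv_smul_mem₀ hr.ne']
  simp only [crossPolytope, Set.mem_ofPred_eq, Pi.smul_apply, vadd_eq_add, Pi.sub_apply,
    smul_eq_mul, abs_mul, abs_of_pos (inv_pos.2 hr), ← Finset.mul_sum, neg_add_eq_sub]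
  rw [inv_mul_le_iff₀ hr, mul_one]

theorem K1_covered_by_six_translates_general [DecidableEq ι] [Nontrivial ι] :
    crossPolytope 𝕜 ι ⊆ ⋃ i,
      ((Pi.single i (1 / Fintype.card ι) : ι → 𝕜) +ᵥ
        (1 - 1 / Fintype.card ι : 𝕜) • crossPolytope 𝕜 ι) ∪
      ((Pi.single i (-1 / Fintype.card ι) : ι → 𝕜) +ᵥ
        (1 - 1 / Fintype.card ι : 𝕜) • crossPolytope 𝕜 ι) := by
  intro x hx
  have hcard : (1 : 𝕜) < Fintype.card ι := mod_cast Fintype.one_lt_card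
  have hcard_pos : (0 : 𝕜) < Fintype.card ι := one_pos.trans hcard
  have hscale : 0 < (1 - 1 / Fintype.card ι : 𝕜) := sub_pos.2 ((div_lt_one hcard_pos).2 hcard)
  have hcancel : (Fintype.card ι * (1 / Fintype.card ι) : 𝕜) = 1 :=
    mul_one_div_cancel hcard_pos.ne'
  simpa only [Set.mem_iUnion, Set.mem_union, mem_vadd_smul_crossPolytope_iff hscale, neg_div,
    sub_mul, hcancel, one_mul] using exists_sum_abs_sub_single_le (hx.trans_eq hcancel.symm)

end CrossPolytope

theorem iUnion_fin_three {α : Type*} (s : Fin 3 → Set α) : ⋃ i, s i = s 0 ∪ s 1 ∪ s 2 := by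
  ext x
  simp [Fin.exists_fin_succ, or_assoc]

theorem single_fin_three {α : Type*} [Zero α] (a : α) :
    Pi.single 0 a = ![a, 0, 0] ∧ Pi.single 1 a = ![0, a, 0] ∧ Pi.single 2 a = ![0, 0, a] := by
  refine ⟨?_, ?_, ?_⟩ <;> ext j <;> fin_cases j <;> rfl

theorem K1_eq_crossPolytope : K1 = crossPolytope ℝ (Fin 3) := by
  simp only [K1, crossPolytope, Fin.sum_univ_three]

/-- `K1` is covered by the six translates of `(2/3) • K1` by the vectors
`±(1/3,0,0), ±(0,1/3,0), ±(0,0,1/3)`. -/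
theorem K1_covered_by_six_translates :
    K1 ⊆ (![(1 : ℝ)/3, 0, 0] +ᵥ (2 / 3 : ℝ) • K1) ∪
        (![-(1 : ℝ)/3, 0, 0] +ᵥ (2 / 3 : ℝ) • K1) ∪
        (![0, (1 : ℝ)/3, 0] +ᵥ (2 / 3 : ℝ) • K1) ∪
        (![0, -(1 : ℝ)/3, 0] +ᵥ (2 / 3 : ℝ) • K1) ∪
        (![0, 0, (1 : ℝ)/3] +ᵥ (2 / 3 : ℝ) • K1) ∪
        (![0, 0, -(1 : ℝ)/3] +ᵥ (2 / 3 : ℝ) • K1) := by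
  have hscale : (1 - 1 / 3 : ℝ) = 2 / 3 := by norm_num
  simpa only [← K1_eq_crossPolytope, iUnion_fin_three, single_fin_three, Fintype.card_fin,
    Nat.cast_ofNat, hscale, Set.union_assoc] using
    K1_covered_by_six_translates_general (𝕜 := ℝ) (ι := Fin 3)
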